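/- Let Γ₁ = ℤ[i] and Γ₂ = ⟨u, v⟩_ℤ for ℝ-linearly independent u, v ∈ ℤ[i]. If Im(u·conj(v)) divides each of Im(u²), Im(v²), and Im(uv), but divides none of N(u), N(v), and Re(u·conj(v)), then the point group of the color group H of the coloring of Γ₁ determined by Γ₂ is the group of order 4 consisting of the identity, the 180°-rotation z ↦ −z, the reflection z ↦ conj(z), and the reflection z ↦ −conj(z) (so the color group is of type pmm). -/

import Mathlib

open Complex

/-- A symmetry `h` of the plane (identified with `ℂ`) is a *color symmetry* of the
coloring of `Γ₁` determined by its subgroup `Γ₂` (each coset of `Γ₂` is one color) if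
there is a permutation `σ` of the colors with `c (h ℓ) = σ (c ℓ)` for all `ℓ ∈ Γ₁`. -/
def IsColorSymmetry (Γ₁ Γ₂ : AddSubgroup ℂ) (h : ℂ → ℂ) : Prop :=
  ∃ σ : Equiv.Perm (ℂ ⧸ Γ₂), ∀ ℓ ∈ Γ₁,
    (QuotientAddGroup.mk (h ℓ) : ℂ ⧸ Γ₂) = σ (QuotientAddGroup.mk ℓ)

/-- The point group `P(H)` of the color group `H` of the coloring of `Γ₁` determined by
`Γ₂`: all isometries of the plane fixing the origin, mapping `Γ₁` onto itself, and
permuting the colors. -/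
def pointColorGroup (Γ₁ Γ₂ : AddSubgroup ℂ) : Set (ℂ → ℂ) :=
  {g | Isometry g ∧ Function.Surjective g ∧ g 0 = 0 ∧
    g '' (Γ₁ : Set ℂ) = Γ₁ ∧ IsColorSymmetry Γ₁ Γ₂ g}

/-!
An isometry fixing the origin and permuting the colors is a real-linear isometry that preserves
both `Γ₁` and `Γ₂`. For `Γ₁ = ℤ[i]` only the eight maps `z ↦ a * z` and `z ↦ a * conj z` with
`a ∈ {±1, ±i}` are possible, so the point group is `{±1, ±conj}` exactly when `Γ₂` is stable under
conjugation but not under multiplication by `i`. Cramer's rule turns both stability conditions into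
divisibility by the determinant `Im (u * conj v)`.
-/

section ColorSymmetry

open ComplexConjugate

theorem im_mul_conj_ne_zero_of_linearIndependent {u v : ℂ} (h : LinearIndependent ℝ ![u, v]) :
    (u * conj v).im ≠ 0 := by
  intro him
  have hre : ((u * conj v).re : ℂ) = u * conj v := Complex.ext rfl him.symm
  have hrel : normSq v • u + (-(u * conj v).re) • v = 0 := by
    simp only [real_smul, ofReal_neg, hre, ← mul_conj]
    ring
  have hv : normSq v = 0 := (LinearIndependent.pair_iff.1 h _ _ hrel).1
  exact h.ne_zero 1 (normSq_eq_zero.1 hv)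

/-- Cramer's rule for the coordinates of `w` with respect to `u` and `v`. -/
theorem im_mul_conj_mul_eq (u v w : ℂ) :
    ((u * conj v).im : ℂ) * w = (w * conj v).im * u - (w * conj u).im * v := by
  apply Complex.ext <;> simp <;> ring

theorem mem_closure_pair_iff_dvd {u v w : ℂ} {d a b : ℤ} (hd : (u * conj v).im = d) (hd₀ : d ≠ 0)
    (ha : (w * conj v).im = a) (hb : (w * conj u).im = b) :
    w ∈ AddSubgroup.closure {u, v} ↔ d ∣ a ∧ d ∣ b := by
  have cramer : (d : ℂ) * w = a * u - b * v := by
    simpa [hd, ha, hb] using im_mul_conj_mul_eq u v w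
  rw [AddSubgroup.mem_closure_pair]
  constructor
  · rintro ⟨m, n, rfl⟩
    have ha' : (a : ℝ) = d * m := by
      rw [← ha, ← hd]
      simp
      ring
    have hb' : (b : ℝ) = d * -n := by
      rw [← hb, ← hd]
      simp
      ring
    exact ⟨⟨m, mod_cast ha'⟩, ⟨-n, mod_cast hb'⟩⟩
  · rintro ⟨⟨m, rfl⟩, n, rfl⟩
    refine ⟨m, -n, mul_left_cancel₀ (Int.cast_ne_zero.2 hd₀ : (d : ℂ) ≠ 0) ?_⟩
    rw [cramer]
    push_cast [zsmul_eq_mul]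
    ring

theorem forall_mem_closure_pair_map_mem_iff {A B F : Type*} [AddGroup A] [AddGroup B]
    [FunLike F A B] [AddMonoidHomClass F A B] (f : F) {x y : A} {Γ : AddSubgroup B} :
    (∀ z ∈ AddSubgroup.closure {x, y}, f z ∈ Γ) ↔ f x ∈ Γ ∧ f y ∈ Γ :=
  (AddSubgroup.closure_le (Γ.comap (f : A →+ B))).trans Set.pair_subset_iff

theorem forall_conj_mem_closure_pair_iff_dvd {u v : ℂ} {d a b c : ℤ} (hd : (u * conj v).im = d)
    (hd₀ : d ≠ 0) (ha : (u ^ 2).im = a) (hb : (v ^ 2).im = b) (hc : (u * v).im = c) :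
    (∀ z ∈ AddSubgroup.closure {u, v}, conj z ∈ AddSubgroup.closure {u, v}) ↔
      d ∣ a ∧ d ∣ b ∧ d ∣ c := by
  have huu : (conj u * conj u).im = (-a : ℤ) := by
    rw [← map_mul, ← sq, conj_im, ha, Int.cast_neg]
  have hvv : (conj v * conj v).im = (-b : ℤ) := by
    rw [← map_mul, ← sq, conj_im, hb, Int.cast_neg]
  have huv : (conj u * conj v).im = (-c : ℤ) := by
    rw [← map_mul, conj_im, hc, Int.cast_neg]
  rw [forall_mem_closure_pair_map_mem_iff, mem_closure_pair_iff_dvd hd hd₀ huv huu,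
    mem_closure_pair_iff_dvd hd hd₀ hvv (mul_comm (conj u) _ ▸ huv)]
  simp only [dvd_neg]
  tauto

theorem forall_I_mul_mem_closure_pair_iff_dvd {u v : ℂ} {d a b c : ℤ} (hd : (u * conj v).im = d)
    (hd₀ : d ≠ 0) (ha : normSq u = a) (hb : normSq v = b) (hc : (u * conj v).re = c) :
    (∀ z ∈ AddSubgroup.closure {u, v}, I * z ∈ AddSubgroup.closure {u, v}) ↔
      d ∣ a ∧ d ∣ b ∧ d ∣ c := by
  have huu : (I * u * conj u).im = a := by
    rw [mul_assoc, I_mul_im, mul_conj, ofReal_re, ha]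
  have hvv : (I * v * conj v).im = b := by
    rw [mul_assoc, I_mul_im, mul_conj, ofReal_re, hb]
  have huv : (I * u * conj v).im = c := by
    rw [mul_assoc, I_mul_im, hc]
  have hvu : (I * v * conj u).im = c := by
    rw [mul_assoc, I_mul_im, ← hc, ← conj_re, map_mul, conj_conj, mul_comm]
  refine (forall_mem_closure_pair_map_mem_iff (AddMonoidHom.mulLeft I)).trans ?_
  rw [AddMonoidHom.coe_mulLeft, mem_closure_pair_iff_dvd hd hd₀ huv huu,
    mem_closure_pair_iff_dvd hd hd₀ hvv hvu]
  tauto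

theorem conj_mem_iff_of_forall {Γ : AddSubgroup ℂ} (h : ∀ z ∈ Γ, conj z ∈ Γ) {z : ℂ} :
    conj z ∈ Γ ↔ z ∈ Γ :=
  ⟨fun hz => by simpa using h _ hz, h z⟩

theorem I_mul_mem_iff_of_forall {Γ : AddSubgroup ℂ} (h : ∀ z ∈ Γ, I * z ∈ Γ) {z : ℂ} :
    I * z ∈ Γ ↔ z ∈ Γ :=
  ⟨fun hz => by simpa [← mul_assoc] using h _ hz, h z⟩

theorem IsColorSymmetry.map_mem_iff {Γ₁ Γ₂ : AddSubgroup ℂ} {h : ℂ → ℂ}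
    (hh : IsColorSymmetry Γ₁ Γ₂ h) (h₀ : h 0 = 0) {z : ℂ} (hz : z ∈ Γ₁) :
    h z ∈ Γ₂ ↔ z ∈ Γ₂ := by
  obtain ⟨σ, hσ⟩ := hh
  have hσ₀ : σ 0 = 0 := by simpa [h₀] using (hσ 0 (zero_mem _)).symm
  rw [← QuotientAddGroup.eq_zero_iff, ← QuotientAddGroup.eq_zero_iff, hσ z hz]
  exact σ.injective.eq_iff' hσ₀

theorem isColorSymmetry_of_map_eq (Γ₁ : AddSubgroup ℂ) {Γ₂ : AddSubgroup ℂ} (e : ℂ ≃+ ℂ)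
    (he : Γ₂.map (e : ℂ →+ ℂ) = Γ₂) : IsColorSymmetry Γ₁ Γ₂ e :=
  ⟨(QuotientAddGroup.congr Γ₂ Γ₂ e he).toEquiv, fun _ _ => rfl⟩

section PointColorGroup

variable {Γ₁ Γ₂ : AddSubgroup ℂ}

theorem exists_linearIsometryEquiv_of_mem_pointColorGroup {g : ℂ → ℂ}
    (hg : g ∈ pointColorGroup Γ₁ Γ₂) : ∃ f : ℂ ≃ₗᵢ[ℝ] ℂ, ⇑f = g := by
  obtain ⟨hiso, hsurj, h₀, -, -⟩ := hg
  let e : ℂ ≃ᵢ ℂ := ⟨Equiv.ofBijective g ⟨hiso.injective, hsurj⟩, hiso⟩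
  exact ⟨e.toRealLinearIsometryEquivOfMapZero h₀, rfl⟩

theorem coe_mem_pointColorGroup_iff (hΓ : Γ₂ ≤ Γ₁) (f : ℂ ≃ₗᵢ[ℝ] ℂ) :
    ⇑f ∈ pointColorGroup Γ₁ Γ₂ ↔ (∀ z, f z ∈ Γ₁ ↔ z ∈ Γ₁) ∧ (∀ z, f z ∈ Γ₂ ↔ z ∈ Γ₂) := by
  have image_eq_iff (Γ : AddSubgroup ℂ) : f '' Γ = Γ ↔ ∀ z, f z ∈ Γ ↔ z ∈ Γ := by
    rw [eq_comm]
    exact (f.toEquiv.preimage_eq_iff_eq_image _ _).symm.trans Set.ext_iff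
  constructor
  · rintro ⟨-, -, h₀, himg, hcol⟩
    have h₁ := (image_eq_iff Γ₁).1 himg
    refine ⟨h₁, fun z => ⟨fun hz => ?_, fun hz => (hcol.map_mem_iff h₀ (hΓ hz)).2 hz⟩⟩
    exact (hcol.map_mem_iff h₀ ((h₁ z).1 (hΓ hz))).1 hz
  · rintro ⟨h₁, h₂⟩
    refine ⟨f.isometry, f.surjective, map_zero f, (image_eq_iff Γ₁).2 h₁, ?_⟩
    exact isColorSymmetry_of_map_eq Γ₁ f.toLinearEquiv.toAddEquiv
      (SetLike.coe_injective ((image_eq_iff Γ₂).2 h₂))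

theorem neg_mem_pointColorGroup (hΓ : Γ₂ ≤ Γ₁) {g : ℂ → ℂ} (hg : g ∈ pointColorGroup Γ₁ Γ₂) :
    (fun z => -g z) ∈ pointColorGroup Γ₁ Γ₂ := by
  obtain ⟨f, rfl⟩ := exists_linearIsometryEquiv_of_mem_pointColorGroup hg
  refine (coe_mem_pointColorGroup_iff hΓ (f.trans (.neg ℝ))).2 ?_
  simpa using (coe_mem_pointColorGroup_iff hΓ f).1 hg

end PointColorGroup

/-- The square lattice `ℤ[i]`, as an additive subgroup of the plane. -/
def gaussianLattice : AddSubgroup ℂ := AddSubgroup.closure {1, I}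

theorem mem_gaussianLattice {z : ℂ} : z ∈ gaussianLattice ↔ ∃ a b : ℤ, z = a + b * I := by
  rw [gaussianLattice, AddSubgroup.mem_closure_pair]
  simp [eq_comm]

theorem one_mem_gaussianLattice : 1 ∈ gaussianLattice :=
  AddSubgroup.subset_closure (Set.mem_insert 1 {I})

theorem conj_mem_gaussianLattice {z : ℂ} : conj z ∈ gaussianLattice ↔ z ∈ gaussianLattice := by
  refine conj_mem_iff_of_forall fun z hz => ?_
  obtain ⟨a, b, rfl⟩ := mem_gaussianLattice.1 hz
  exact mem_gaussianLattice.2 ⟨a, -b, by simp⟩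

theorem I_mul_mem_gaussianLattice {z : ℂ} : I * z ∈ gaussianLattice ↔ z ∈ gaussianLattice := by
  refine I_mul_mem_iff_of_forall fun z hz => ?_
  obtain ⟨a, b, rfl⟩ := mem_gaussianLattice.1 hz
  refine mem_gaussianLattice.2 ⟨-b, a, ?_⟩
  push_cast
  linear_combination (b : ℂ) * I_mul_I

theorem eq_one_or_neg_one_or_I_or_neg_I_of_mem_gaussianLattice {z : ℂ} (hz : z ∈ gaussianLattice)
    (hnorm : ‖z‖ = 1) : z = 1 ∨ z = -1 ∨ z = I ∨ z = -I := by
  obtain ⟨a, b, rfl⟩ := mem_gaussianLattice.1 hz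
  have hab : a ^ 2 + b ^ 2 = 1 := by
    have h := normSq_eq_norm_sq (a + b * I)
    rw [hnorm, ← ofReal_intCast, ← ofReal_intCast, normSq_add_mul_I] at h
    exact_mod_cast h.trans (one_pow 2)
  obtain ⟨ha₁, ha₂⟩ : -1 ≤ a ∧ a ≤ 1 := abs_le.1 (abs_le_one_iff_mul_self_le_one.2 (by nlinarith))
  obtain ⟨hb₁, hb₂⟩ : -1 ≤ b ∧ b ≤ 1 := abs_le.1 (abs_le_one_iff_mul_self_le_one.2 (by nlinarith))
  interval_cases a <;> interval_cases b <;> simp_all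

theorem exists_unit_of_mem_pointColorGroup_gaussianLattice {Γ : AddSubgroup ℂ} {g : ℂ → ℂ}
    (hg : g ∈ pointColorGroup gaussianLattice Γ) :
    ∃ a : ℂ, (a = 1 ∨ a = -1 ∨ a = I ∨ a = -I) ∧
      (g = (fun z => a * z) ∨ g = fun z => a * conj z) := by
  obtain ⟨f, rfl⟩ := exists_linearIsometryEquiv_of_mem_pointColorGroup hg
  obtain ⟨a, ha⟩ := linear_isometry_complex f
  have hf : ⇑f = (fun z : ℂ => a * z) ∨ ⇑f = fun z : ℂ => a * conj z :=
    ha.imp (congrArg DFunLike.coe) (congrArg DFunLike.coe)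
  have ha_eq : f 1 = a := by rcases hf with h | h <;> simp [h]
  have ha_mem : (a : ℂ) ∈ gaussianLattice := by
    have himg : f '' gaussianLattice = gaussianLattice := hg.2.2.2.1
    rw [← ha_eq, ← SetLike.mem_coe, ← himg]
    exact Set.mem_image_of_mem f one_mem_gaussianLattice
  exact ⟨a, eq_one_or_neg_one_or_I_or_neg_I_of_mem_gaussianLattice ha_mem a.norm_coe, hf⟩

section GaussianLattice

variable {Γ : AddSubgroup ℂ}

theorem id_mem_pointColorGroup_gaussianLattice (hΓ : Γ ≤ gaussianLattice) :
    (fun z => z) ∈ pointColorGroup gaussianLattice Γ :=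
  (coe_mem_pointColorGroup_iff hΓ (.refl ℝ ℂ)).2 ⟨fun _ => Iff.rfl, fun _ => Iff.rfl⟩

theorem conj_mem_pointColorGroup_gaussianLattice_iff (hΓ : Γ ≤ gaussianLattice) :
    (fun z => conj z) ∈ pointColorGroup gaussianLattice Γ ↔ ∀ z ∈ Γ, conj z ∈ Γ :=
  (coe_mem_pointColorGroup_iff hΓ conjLIE).trans
    ⟨fun h z => (h.2 z).2, fun h => ⟨fun _ => conj_mem_gaussianLattice,
      fun _ => conj_mem_iff_of_forall h⟩⟩

theorem I_mul_mem_pointColorGroup_gaussianLattice (hΓ : Γ ≤ gaussianLattice)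
    (h : ∀ z ∈ Γ, I * z ∈ Γ) : (fun z => I * z) ∈ pointColorGroup gaussianLattice Γ :=
  (coe_mem_pointColorGroup_iff hΓ (rotation ⟨I, by simp [Submonoid.unitSphere]⟩)).2
    ⟨fun _ => I_mul_mem_gaussianLattice, fun _ => I_mul_mem_iff_of_forall h⟩

/-- The point group of type `pmm` whose mirrors are the coordinate axes, as a set of maps so that it
can be compared with `pointColorGroup`. -/
def pmmPointGroup : Set (ℂ → ℂ) :=
  {fun z => z, fun z => -z, fun z => conj z, fun z => -conj z}

theorem I_mul_notMem_pmmPointGroup : (fun z => I * z) ∉ pmmPointGroup := by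
  rintro (h | h | h | h) <;> simpa [Complex.ext_iff] using congrFun h 1

theorem pmmPointGroup_subset_pointColorGroup (hΓ : Γ ≤ gaussianLattice)
    (hconj : ∀ z ∈ Γ, conj z ∈ Γ) : pmmPointGroup ⊆ pointColorGroup gaussianLattice Γ := by
  have hid := id_mem_pointColorGroup_gaussianLattice hΓ
  have hc := (conj_mem_pointColorGroup_gaussianLattice_iff hΓ).2 hconj
  rintro g (rfl | rfl | rfl | rfl)
  exacts [hid, neg_mem_pointColorGroup hΓ hid, hc, neg_mem_pointColorGroup hΓ hc]

theorem pointColorGroup_subset_pmmPointGroup (hΓ : Γ ≤ gaussianLattice)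
    (hconj : ∀ z ∈ Γ, conj z ∈ Γ) (hI : ¬ ∀ z ∈ Γ, I * z ∈ Γ) :
    pointColorGroup gaussianLattice Γ ⊆ pmmPointGroup := by
  intro g hg
  obtain ⟨a, ha, hform⟩ := exists_unit_of_mem_pointColorGroup_gaussianLattice hg
  have hmap : ∀ z ∈ Γ, g z ∈ Γ := fun z hz => (hg.2.2.2.2.map_mem_iff hg.2.2.1 (hΓ hz)).2 hz
  have hmul : ∀ z ∈ Γ, a * z ∈ Γ := by
    intro z hz
    rcases hform with rfl | rfl
    · exact hmap z hz
    · simpa using hmap _ (hconj z hz)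
  rcases ha with rfl | rfl | rfl | rfl
  · rcases hform with rfl | rfl <;> simp [pmmPointGroup]
  · rcases hform with rfl | rfl <;> simp [pmmPointGroup]
  · exact absurd hmul hI
  · exact absurd (fun z hz => by simpa using hmul z hz) hI

theorem pointColorGroup_eq_pmmPointGroup_iff (hΓ : Γ ≤ gaussianLattice) :
    pointColorGroup gaussianLattice Γ = pmmPointGroup ↔
      (∀ z ∈ Γ, conj z ∈ Γ) ∧ ¬ ∀ z ∈ Γ, I * z ∈ Γ := by
  constructor
  · intro h
    refine ⟨(conj_mem_pointColorGroup_gaussianLattice_iff hΓ).1 ?_, fun hI => ?_⟩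
    · simp [h, pmmPointGroup]
    · exact I_mul_notMem_pmmPointGroup (h ▸ I_mul_mem_pointColorGroup_gaussianLattice hΓ hI)
  · rintro ⟨hconj, hI⟩
    exact (pointColorGroup_subset_pmmPointGroup hΓ hconj hI).antisymm
      (pmmPointGroup_subset_pointColorGroup hΓ hconj)

end GaussianLattice

theorem pointColorGroup_pmm_general {u v : ℂ} (hu : u ∈ gaussianLattice) (hv : v ∈ gaussianLattice)
    (hind : LinearIndependent ℝ ![u, v]) {ruv iuv nu nv iu2 iv2 imuv : ℤ}
    (hruv : (u * conj v).re = ruv) (hiuv : (u * conj v).im = iuv)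
    (hnu : normSq u = nu) (hnv : normSq v = nv)
    (hiu2 : (u ^ 2).im = iu2) (hiv2 : (v ^ 2).im = iv2) (himuv : (u * v).im = imuv) :
    pointColorGroup gaussianLattice (AddSubgroup.closure {u, v}) = pmmPointGroup ↔
      (iuv ∣ iu2 ∧ iuv ∣ iv2 ∧ iuv ∣ imuv) ∧ ¬ (iuv ∣ nu ∧ iuv ∣ nv ∧ iuv ∣ ruv) := by
  have hiuv₀ : iuv ≠ 0 := by
    rw [← Int.cast_ne_zero (α := ℝ), ← hiuv]
    exact im_mul_conj_ne_zero_of_linearIndependent hind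
  have hΓ : AddSubgroup.closure {u, v} ≤ gaussianLattice :=
    (AddSubgroup.closure_le _).2 (Set.pair_subset hu hv)
  rw [pointColorGroup_eq_pmmPointGroup_iff hΓ,
    forall_conj_mem_closure_pair_iff_dvd hiuv hiuv₀ hiu2 hiv2 himuv,
    forall_I_mul_mem_closure_pair_iff_dvd hiuv hiuv₀ hnu hnv hruv]

end ColorSymmetry

/-- Case (c) for the square lattice `Γ₁ = ℤ[i]`: if `Im(u·conj v)` divides all of
`Im(u²)`, `Im(v²)`, `Im(uv)` but none of `N(u)`, `N(v)`, `Re(u·conj v)`, then the point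
group of the color group of the coloring of `Γ₁` determined by `Γ₂ = ⟨u, v⟩_ℤ` consists
of the identity, the `180°`-rotation, and the reflections `z ↦ conj z` and
`z ↦ -conj z` (type `pmm`). -/
theorem pointColorGroup_pmm (u v : ℂ) (u₁ u₂ v₁ v₂ : ℤ)
    (hu : u = u₁ + u₂ * I) (hv : v = v₁ + v₂ * I)
    (hind : LinearIndependent ℝ ![u, v])
    (Γ₁ Γ₂ : AddSubgroup ℂ)
    (hΓ₁ : Γ₁ = AddSubgroup.closure ({1, I} : Set ℂ))
    (hΓ₂ : Γ₂ = AddSubgroup.closure ({u, v} : Set ℂ))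
    (ruv iuv nu nv ru2 iu2 rv2 iv2 rmuv imuv : ℤ)
    (hruv : u * starRingEnd ℂ v = ruv + iuv * I)
    (hnu : u * starRingEnd ℂ u = (nu : ℂ))
    (hnv : v * starRingEnd ℂ v = (nv : ℂ))
    (hu2 : u ^ 2 = ru2 + iu2 * I)
    (hv2 : v ^ 2 = rv2 + iv2 * I)
    (hmuv : u * v = rmuv + imuv * I)
    (hdvd : iuv ∣ iu2 ∧ iuv ∣ iv2 ∧ iuv ∣ imuv)
    (hndvd : ¬ iuv ∣ nu ∧ ¬ iuv ∣ nv ∧ ¬ iuv ∣ ruv) :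
    pointColorGroup Γ₁ Γ₂ =
      {fun z => z, fun z => -z, fun z => starRingEnd ℂ z, fun z => -starRingEnd ℂ z} := by
  subst hΓ₁ hΓ₂
  exact (pointColorGroup_pmm_general (mem_gaussianLattice.2 ⟨u₁, u₂, hu⟩)
    (mem_gaussianLattice.2 ⟨v₁, v₂, hv⟩) hind
    (ruv := ruv) (iuv := iuv) (nv := nv) (by simp [hruv]) (by simp [hruv])
    (mod_cast (mul_conj u).symm.trans hnu) (mod_cast (mul_conj v).symm.trans hnv)
    (by simp [hu2]) (by simp [hv2]) (by simp [hmuv])).2 ⟨hdvd, fun h => hndvd.1 h.1⟩
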